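/- arXiv:1103.0370 — 7 statements merged into one kernel-verified Lean document; each statement's English description precedes it below -/
import Mathlib

section
/- Let b be a positive integer and let a₁ and a₂ be integers with gcd(a₁, b) = 1 and gcd(a₂, b) = 1. If s(a₁, b) = s(a₂, b), then b divides (1 − a₁·a₂)·(a₁ − a₂). -/
/-- The sawtooth function `((x))`: equal to `x - ⌊x⌋ - 1/2` if `x` is not an
integer, and `0` if `x` is an integer. -/
def sawtooth (x : ℚ) : ℚ := if Int.fract x = 0 then 0 else Int.fract x - 1/2

/-- The classical Dedekind sum `s(a,b) = ∑_{k=0}^{b-1} ((k·a/b)) ((k/b))`. -/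
def dedekindSum (a : ℤ) (b : ℕ) : ℚ :=
  ∑ k ∈ Finset.range b, sawtooth ((k : ℚ) * a / b) * sawtooth ((k : ℚ) / b)

lemma ded_perm (a : ℤ) (b : ℕ) (hb : 0 < b) (h : Int.gcd a b = 1) (f : ℤ → ℤ) :
    ∑ k ∈ Finset.range b, f (((k : ℤ) * a) % b) = ∑ k ∈ Finset.range b, f (k : ℤ) := by
  have hb' : (0 : ℤ) < b := by exact_mod_cast hb
  let g : ℕ → ℕ := fun k => (((k : ℤ) * a) % b).toNat
  have hg : ∀ k, ((g k : ℕ) : ℤ) = ((k : ℤ) * a) % b := fun k =>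
    Int.toNat_of_nonneg (Int.emod_nonneg _ hb'.ne')
  have hinj : Set.InjOn g (Finset.range b : Finset ℕ) := by
    intro x hx y hy hxy
    simp only [Finset.coe_range, Set.mem_Iio] at hx hy
    have h1 : ((x : ℤ) * a) % b = ((y : ℤ) * a) % b := by rw [← hg, ← hg, hxy]
    have h2 : (b : ℤ) ∣ ((x : ℤ) - y) * a := by
      rw [sub_mul]
      exact Int.ModEq.dvd h1.symm
    have h3 : IsCoprime (b : ℤ) a := (Int.isCoprime_iff_gcd_eq_one.mpr h).symm
    have h4 : (b : ℤ) ∣ (x : ℤ) - y := h3.dvd_of_dvd_mul_right h2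
    have h5 : (x : ℤ) - y = 0 := by
      apply Int.eq_zero_of_abs_lt_dvd h4
      rw [abs_lt]; constructor <;> omega
    omega
  have him : (Finset.range b).image g = Finset.range b := by
    apply Finset.eq_of_subset_of_card_le
    · intro x hx
      obtain ⟨k, _, rfl⟩ := Finset.mem_image.mp hx
      have := Int.emod_lt_of_pos ((k : ℤ) * a) hb'
      rw [← hg] at this
      exact Finset.mem_range.mpr (by exact_mod_cast this)
    · rw [Finset.card_image_of_injOn hinj]
  conv_rhs => rw [← him]
  rw [Finset.sum_image hinj]
  exact Finset.sum_congr rfl fun k _ => by rw [hg]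

lemma ded_sum1 (b : ℕ) : 2 * ∑ k ∈ Finset.range b, (k : ℤ) = b * (b - 1) := by
  induction b with
  | zero => simp
  | succ n ih => rw [Finset.sum_range_succ, mul_add, ih]; push_cast; ring

lemma ded_sum2 (b : ℕ) :
    6 * ∑ k ∈ Finset.range b, (k : ℤ) ^ 2 = b * (b - 1) * (2 * b - 1) := by
  induction b with
  | zero => simp
  | succ n ih => rw [Finset.sum_range_succ, mul_add, ih]; push_cast; ring

lemma ded_term (a : ℤ) (b : ℕ) (hb : 0 < b) (h : Int.gcd a b = 1) (k : ℕ)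
    (hk : k < b) (hk0 : k ≠ 0) :
    sawtooth ((k : ℚ) * a / b) * sawtooth ((k : ℚ) / b) =
      ((((k : ℤ) * a % b : ℤ) : ℚ) / b - 1 / 2) * ((k : ℚ) / b - 1 / 2) := by
  have hbq : (b : ℚ) ≠ 0 := by exact_mod_cast hb.ne'
  have e1 : Int.fract ((k : ℚ) * a / b) = (((k : ℤ) * a % b : ℤ) : ℚ) / b := by
    have := Int.fract_div_intCast_eq_div_intCast_mod (k := ℚ) (m := (k : ℤ) * a) (n := b)
    push_cast at this ⊢
    exact this
  have e2 : Int.fract ((k : ℚ) / b) = (k : ℚ) / b := by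
    rw [Int.fract_eq_self]
    refine ⟨by positivity, ?_⟩
    rw [div_lt_one (by positivity)]
    exact_mod_cast hk
  have n1 : ((k : ℤ) * a % b : ℤ) ≠ 0 := by
    intro h0
    have h2 := Int.dvd_of_emod_eq_zero h0
    have h3 : IsCoprime (b : ℤ) a := (Int.isCoprime_iff_gcd_eq_one.mpr h).symm
    have h4 : (b : ℤ) ∣ (k : ℤ) := h3.dvd_of_dvd_mul_right h2
    have := Nat.le_of_dvd (by omega) (Int.natCast_dvd_natCast.mp h4)
    omega
  unfold sawtooth
  rw [e1, e2, if_neg, if_neg]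
  · exact div_ne_zero (by exact_mod_cast hk0) hbq
  · exact div_ne_zero (by exact_mod_cast n1) hbq

lemma ded_key (a : ℤ) (b : ℕ) (hb : 0 < b) (h : Int.gcd a b = 1) :
    ∃ N : ℤ, 12 * b * dedekindSum a b = N ∧ (b : ℤ) ∣ N * a - (a ^ 2 + 1) := by
  have hbq : (b : ℚ) ≠ 0 := by exact_mod_cast hb.ne'
  have hbz : (b : ℤ) ≠ 0 := by exact_mod_cast hb.ne'
  have p1 := ded_perm a b hb h (fun x => x)
  have p2 := ded_perm a b hb h (fun x => x ^ 2)
  have s1 := ded_sum1 b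
  have s2 := ded_sum2 b
  set r : ℕ → ℤ := fun k => ((k : ℤ) * a) % b with hr
  set q : ℕ → ℤ := fun k => ((k : ℤ) * a) / b with hq
  have rq : ∀ k : ℕ, r k = k * a - b * q k := fun k => by
    simp only [hr, hq]; have := Int.emod_add_mul_ediv ((k : ℤ) * a) b; linarith
  have hS : dedekindSum a b =
      ∑ k ∈ Finset.range b, ((r k : ℚ) / b - 1 / 2) * ((k : ℚ) / b - 1 / 2) - 1 / 4 := by
    unfold dedekindSum
    obtain ⟨n, rfl⟩ : ∃ n, b = n + 1 := ⟨b - 1, by omega⟩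
    rw [Finset.sum_range_succ', Finset.sum_range_succ']
    rw [Finset.sum_congr rfl fun k hk => ded_term a (n + 1) hb h (k + 1)
      (by have := Finset.mem_range.mp hk; omega) (by omega)]
    simp [hr, sawtooth]
    norm_num
  have p2' : a ^ 2 * ∑ k ∈ Finset.range b, (k : ℤ) ^ 2
      - 2 * a * b * ∑ k ∈ Finset.range b, (k : ℤ) * q k
      + b ^ 2 * ∑ k ∈ Finset.range b, q k ^ 2 = ∑ k ∈ Finset.range b, (k : ℤ) ^ 2 := by
    refine Eq.trans ?_ p2
    rw [Finset.mul_sum, Finset.mul_sum, Finset.mul_sum, ← Finset.sum_sub_distrib,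
      ← Finset.sum_add_distrib]
    refine Finset.sum_congr rfl fun k _ => ?_
    have := rq k
    simp only [hr] at this
    rw [this]; ring
  have p3 : ∑ k ∈ Finset.range b, (k : ℤ) * r k = a * ∑ k ∈ Finset.range b, (k : ℤ) ^ 2
      - b * ∑ k ∈ Finset.range b, (k : ℤ) * q k := by
    rw [Finset.mul_sum, Finset.mul_sum, ← Finset.sum_sub_distrib]
    refine Finset.sum_congr rfl fun k _ => ?_
    rw [rq k]; ring
  have hS2 : (b : ℚ) ^ 2 * dedekindSum a b = ((∑ k ∈ Finset.range b, (k : ℤ) * r k : ℤ) : ℚ)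
      - b / 2 * ((∑ k ∈ Finset.range b, r k : ℤ) : ℚ)
      - b / 2 * ((∑ k ∈ Finset.range b, (k : ℤ) : ℤ) : ℚ) + b ^ 3 / 4 - b ^ 2 / 4 := by
    have hc : (b : ℚ) ^ 3 / 4 = ∑ k ∈ Finset.range b, (b : ℚ) ^ 2 / 4 := by
      rw [Finset.sum_const, Finset.card_range, nsmul_eq_mul]; ring
    rw [hS, hc, mul_sub]
    push_cast
    rw [Finset.mul_sum, Finset.mul_sum, Finset.mul_sum, ← Finset.sum_sub_distrib,
      ← Finset.sum_sub_distrib, ← Finset.sum_add_distrib]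
    congr 1
    · refine Finset.sum_congr rfl fun k _ => ?_
      field_simp
      ring
    · ring
  have p1' : ∑ k ∈ Finset.range b, r k = ∑ k ∈ Finset.range b, (k : ℤ) := p1
  rw [p1', p3] at hS2
  generalize ∑ k ∈ Finset.range b, (k : ℤ) * q k = Q at *
  generalize ∑ k ∈ Finset.range b, q k ^ 2 = R at *
  generalize ∑ k ∈ Finset.range b, (k : ℤ) ^ 2 = U at *
  generalize ∑ k ∈ Finset.range b, (k : ℤ) = T at *
  refine ⟨2 * a * (b - 1) * (2 * b - 1) - 12 * Q - 3 * b * (b - 1), ?_, ?_⟩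
  · have s1q : 2 * (T : ℚ) = b * (b - 1) := by exact_mod_cast s1
    have s2q : 6 * (U : ℚ) = b * (b - 1) * (2 * b - 1) := by exact_mod_cast s2
    apply mul_left_cancel₀ hbq
    push_cast at hS2 ⊢
    linear_combination 12 * hS2 + 2 * a * s2q - 6 * b * s1q
  · have e : (a ^ 2 - 1) * ((b - 1) * (2 * b - 1)) = 12 * a * Q - 6 * b * R := by
      apply mul_left_cancel₀ hbz
      linear_combination 6 * p2' - (a ^ 2 - 1) * s2
    refine ⟨2 * a ^ 2 * (2 * b - 3) - 3 * (b - 1) * a - 6 * R - (a ^ 2 - 1) * (2 * b - 3), ?_⟩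
    linear_combination e

theorem dedekindSum_eq_imp_dvd (b : ℕ) (hb : 0 < b) (a₁ a₂ : ℤ)
    (h₁ : Int.gcd a₁ b = 1) (h₂ : Int.gcd a₂ b = 1)
    (h : dedekindSum a₁ b = dedekindSum a₂ b) :
    (b : ℤ) ∣ (1 - a₁ * a₂) * (a₁ - a₂) := by
  obtain ⟨N, e1, d1⟩ := ded_key a₁ b hb h₁
  obtain ⟨M, e2, d2⟩ := ded_key a₂ b hb h₂
  have : N = M := by
    have : (N : ℚ) = M := by rw [← e1, ← e2, h]
    exact_mod_cast this
  subst this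
  have := dvd_sub (d1.mul_left a₂) (d2.mul_left a₁)
  have e : (1 - a₁ * a₂) * (a₁ - a₂) =
    a₂ * (N * a₁ - (a₁ ^ 2 + 1)) - a₁ * (N * a₂ - (a₂ ^ 2 + 1)) := by ring
  rw [e]; exact this
end

section
/- Let p be a prime and let a₁ and a₂ be integers with gcd(a₁, p) = 1 and gcd(a₂, p) = 1. Then s(a₁, p) = s(a₂, p) if and only if a₁ ≡ a₂ (mod p) or a₁·a₂ ≡ 1 (mod p). -/
lemma ded_sum_range (p : ℕ) [NeZero p] {M : Type*} [AddCommMonoid M] (f : ZMod p → M) :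
    ∑ k ∈ Finset.range p, f (k : ZMod p) = ∑ x : ZMod p, f x := by
  refine Finset.sum_bij' (fun k _ => (k : ZMod p)) (fun x _ => x.val) ?_ ?_ ?_ ?_ ?_
  · simp
  · intro x _; simpa using ZMod.val_lt x
  · intro k hk; exact ZMod.val_cast_of_lt (by simpa using hk)
  · intro x _; simp
  · simp

def dedG (p : ℕ) (z : ZMod p) : ℚ := if z = 0 then 0 else (z.val : ℚ) / p - 1/2

lemma ded_saw (p : ℕ) [NeZero p] (n : ℤ) :
    sawtooth ((n : ℚ) / p) = dedG p (n : ZMod p) := by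
  have hp : (0 : ℚ) < p := by exact_mod_cast NeZero.pos p
  have hf : Int.fract ((n : ℚ) / p) = (((n : ZMod p).val : ℕ) : ℚ) / p := by
    rw [Int.fract_div_intCast_eq_div_intCast_mod (k := ℚ) (m := n) (n := p)]
    have := ZMod.val_intCast (n := p) n
    rw [← this]; simp
  unfold sawtooth dedG
  rw [hf]
  have : (((n : ZMod p).val : ℕ) : ℚ) / p = 0 ↔ (n : ZMod p) = 0 := by
    rw [div_eq_zero_iff]
    rw [Nat.cast_eq_zero, ZMod.val_eq_zero]
    exact or_iff_left hp.ne'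
  simp only [this]

lemma ded_eq (p : ℕ) [NeZero p] (a : ℤ) :
    dedekindSum a p = ∑ x : ZMod p, dedG p ((a : ZMod p) * x) * dedG p x := by
  rw [← ded_sum_range]
  unfold dedekindSum
  refine Finset.sum_congr rfl fun k _ => ?_
  have h1 := ded_saw p (a * k)
  have h2 := ded_saw p k
  push_cast at h1 h2
  rw [← h1, ← h2, mul_comm (k : ℚ)]

def dedT (p : ℕ) [NeZero p] (a : ZMod p) : ℤ := ∑ x : ZMod p, ((a * x).val : ℤ) * x.val

lemma ded_reidx (p : ℕ) [Fact p.Prime] {M : Type*} [AddCommMonoid M] (a : ZMod p) (ha : a ≠ 0)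
    (f : ZMod p → M) : ∑ x : ZMod p, f (a * x) = ∑ x : ZMod p, f x :=
  Equiv.sum_comp (Equiv.mulLeft₀ a ha) f

lemma ded_T (p : ℕ) [Fact p.Prime] (a : ℤ) (ha : (a : ZMod p) ≠ 0) :
    dedekindSum a p = (dedT p a : ℚ) / p ^ 2 - (∑ x : ZMod p, (x.val : ℚ)) / p + p / 4 - 1 / 4 := by
  have hp : (p : ℚ) ≠ 0 := by exact_mod_cast NeZero.ne p
  rw [ded_eq]
  have h : ∀ x : ZMod p, dedG p ((a : ZMod p) * x) * dedG p x =
      ((((a : ZMod p) * x).val : ℚ) * x.val) / p ^ 2 - (((a : ZMod p) * x).val : ℚ) / (2 * p)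
        - (x.val : ℚ) / (2 * p) + 1 / 4 - (if x = 0 then 1 / 4 else 0) := by
    intro x
    unfold dedG
    by_cases hx : x = 0
    · simp [hx]
    · rw [if_neg (mul_ne_zero ha hx), if_neg hx, if_neg hx]
      field_simp
      ring
  simp only [h, Finset.sum_sub_distrib, Finset.sum_add_distrib, ← Finset.sum_div]
  rw [ded_reidx p (a : ZMod p) ha (fun x => (x.val : ℚ))]
  simp [dedT, ZMod.card]
  field_simp
  ring

lemma ded_sq (p : ℕ) [NeZero p] :
    6 * ∑ x : ZMod p, (x.val : ℤ) ^ 2 = p * (p - 1) * (2 * p - 1) := by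
  rw [← ded_sum_range]
  have : ∀ n : ℕ, 6 * ∑ k ∈ Finset.range n, (k : ℤ) ^ 2 = n * (n - 1) * (2 * n - 1) := by
    intro n
    induction n with
    | zero => simp
    | succ n ih => rw [Finset.sum_range_succ, mul_add, ih]; push_cast; ring
  rw [← this p]
  congr 1
  refine Finset.sum_congr rfl fun k hk => ?_
  rw [ZMod.val_cast_of_lt (by simpa using hk)]

lemma ded_key_s1 (p : ℕ) [Fact p.Prime] (a : ℤ) (ha : (a : ZMod p) ≠ 0) :
    (p : ℤ) ^ 2 ∣ 12 * a * dedT p a - (1 + a ^ 2) * p := by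
  have h1 : (p : ℤ) ^ 2 ∣ ∑ x : ZMod p, ((((a : ZMod p) * x).val : ℤ) - a * x.val) ^ 2 := by
    refine Finset.dvd_sum fun x _ => pow_dvd_pow_of_dvd ?_ 2
    rw [← ZMod.intCast_zmod_eq_zero_iff_dvd]
    simp
  have h2 : ∑ x : ZMod p, ((((a : ZMod p) * x).val : ℤ) - a * x.val) ^ 2 =
      (1 + a ^ 2) * ∑ x : ZMod p, (x.val : ℤ) ^ 2 - 2 * a * dedT p a := by
    have := ded_reidx p (a : ZMod p) ha (fun x => (x.val : ℤ) ^ 2)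
    rw [add_mul, one_mul]
    nth_rewrite 1 [← this]
    unfold dedT
    rw [Finset.mul_sum, Finset.mul_sum, ← Finset.sum_add_distrib, ← Finset.sum_sub_distrib]
    refine Finset.sum_congr rfl fun x _ => ?_
    ring
  rw [h2] at h1
  obtain ⟨c, hc⟩ := h1
  have h3 := ded_sq p
  refine ⟨(1 + a ^ 2) * (2 * p - 3) - 6 * c, ?_⟩
  linear_combination (-6) * hc + (1 + a ^ 2) * h3

theorem dedekindSum_eq_iff_of_prime (p : ℕ) (hp : p.Prime) (a₁ a₂ : ℤ)
    (h₁ : Int.gcd a₁ p = 1) (h₂ : Int.gcd a₂ p = 1) :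
    dedekindSum a₁ p = dedekindSum a₂ p ↔
      a₁ ≡ a₂ [ZMOD (p : ℤ)] ∨ a₁ * a₂ ≡ 1 [ZMOD (p : ℤ)] := by
  haveI : Fact p.Prime := ⟨hp⟩
  have hne : ∀ a : ℤ, Int.gcd a p = 1 → (a : ZMod p) ≠ 0 := by
    intro a h h0
    rw [ZMod.intCast_zmod_eq_zero_iff_dvd] at h0
    rw [Int.gcd_eq_right_iff_dvd (by positivity) |>.2 h0 |> fun h => (by exact_mod_cast h : Int.gcd a p = p)] at h
    exact hp.one_lt.ne' h
  have n1 := hne _ h₁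
  have n2 := hne _ h₂
  have hp0 : (p : ℚ) ≠ 0 := by exact_mod_cast hp.ne_zero
  have hp0' : (p : ℤ) ≠ 0 := by exact_mod_cast hp.ne_zero
  constructor
  · intro h
    rw [ded_T p _ n1, ded_T p _ n2] at h
    have hT : dedT p (a₁ : ZMod p) = dedT p (a₂ : ZMod p) := by
      have : (dedT p (a₁ : ZMod p) : ℚ) / p ^ 2 = (dedT p (a₂ : ZMod p) : ℚ) / p ^ 2 := by
        linarith
      rw [div_left_inj' (pow_ne_zero 2 hp0)] at this
      exact_mod_cast this
    obtain ⟨c, hc⟩ := ded_key_s1 p a₁ n1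
    obtain ⟨d, hd⟩ := ded_key_s1 p a₂ n2
    rw [hT] at hc
    have hdvd : (p : ℤ) ∣ (a₁ - a₂) * (a₁ * a₂ - 1) := by
      refine ⟨a₁ * d - a₂ * c, ?_⟩
      apply mul_left_cancel₀ hp0'
      linear_combination a₁ * hd - a₂ * hc
    rcases (Nat.prime_iff_prime_int.1 hp).dvd_or_dvd hdvd with h | h
    · exact Or.inl (Int.modEq_iff_dvd.2 h).symm
    · exact Or.inr (Int.modEq_iff_dvd.2 h).symm
  · rintro (h | h)
    · rw [← ZMod.intCast_eq_intCast_iff] at h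
      rw [ded_eq, ded_eq, h]
    · rw [← ZMod.intCast_eq_intCast_iff] at h
      push_cast at h
      rw [ded_eq, ded_eq, ← ded_reidx p (a₂ : ZMod p) n2]
      refine Finset.sum_congr rfl fun x _ => ?_
      rw [← mul_assoc, h, one_mul, mul_comm]
end

section
/- Let p be a prime, let n be a non-negative integer, and let a₁ and a₂ be integers with gcd(a₁, p) = 1 and gcd(a₂, p) = 1. If rₙ(a₁, p) = rₙ(a₂, p), then a₁ ≡ a₂ (mod p) or a₁·a₂ ≡ 1 + 6·n² (mod p). -/
/-- The Dedekind–Rademacher sum `rₙ(a,b) = ∑_{k=0}^{b-1} (((k·a+n)/b)) ((k/b))`. -/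
def rademacherSum (n : ℕ) (a : ℤ) (b : ℕ) : ℚ :=
  ∑ k ∈ Finset.range b, sawtooth (((k : ℚ) * a + n) / b) * sawtooth ((k : ℚ) / b)


def dlt (x : ℤ) : ℤ := if x = 0 then 1 else 0

lemma saw_aux (p : ℕ) (hp : 0 < p) (m : ℤ) :
    2 * (p : ℚ) * sawtooth ((m : ℚ) / p) = ((2 * (m % p) - p + p * dlt (m % p) : ℤ) : ℚ) := by
  have hp0 : (p : ℚ) ≠ 0 := by positivity
  have hf : Int.fract ((m : ℚ) / p) = ((m % p : ℤ) : ℚ) / p := by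
    have := Int.fract_div_intCast_eq_div_intCast_mod (k := ℚ) (m := m) (n := p)
    exact this
  unfold sawtooth dlt
  rw [hf]
  by_cases h0 : m % (p : ℤ) = 0
  · simp [h0]
  · have : ((m % p : ℤ) : ℚ) / p ≠ 0 := by
      apply div_ne_zero _ hp0
      exact_mod_cast h0
    rw [if_neg this, if_neg h0]
    push_cast
    field_simp
    ring

lemma sum_bij_aux (p : ℕ) (hp : 0 < p) (n : ℕ) (a : ℤ) (h : Int.gcd a p = 1) (f : ℤ → ℤ) :
    ∑ k ∈ Finset.range p, f (((k : ℤ) * a + n) % p) = ∑ k ∈ Finset.range p, f k := by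
  have hpz : (0 : ℤ) < p := by exact_mod_cast hp
  have hnn : ∀ k : ℕ, 0 ≤ ((k : ℤ) * a + n) % p := fun k => Int.emod_nonneg _ hpz.ne'
  have hlt : ∀ k : ℕ, ((k : ℤ) * a + n) % p < p := fun k => Int.emod_lt_of_pos _ hpz
  have hmaps : ∀ k ∈ Finset.range p, (((k : ℤ) * a + n) % p).toNat ∈ Finset.range p := by
    intro k _
    have := hnn k; have := hlt k
    rw [Finset.mem_range]; omega
  have hinj : Set.InjOn (fun k : ℕ => (((k : ℤ) * a + n) % p).toNat) (Finset.range p) := by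
    intro i hi j hj hij
    have hi' : i < p := by simpa using hi
    have hj' : j < p := by simpa using hj
    have e : ((i : ℤ) * a + n) % p = ((j : ℤ) * a + n) % p := by
      have := hnn i; have := hnn j
      simp only at hij
      omega
    have d := Int.ModEq.dvd (show ((i : ℤ) * a + n) ≡ ((j : ℤ) * a + n) [ZMOD p] from e)
    have d2 : (p : ℤ) ∣ a * ((j : ℤ) - i) := by
      convert d using 1; ring
    have hc : IsCoprime (p : ℤ) a := (Int.isCoprime_iff_gcd_eq_one.mpr h).symm
    have d3 := hc.dvd_of_dvd_mul_left d2
    have := Int.eq_zero_of_abs_lt_dvd d3 (by rw [abs_lt]; omega)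
    omega
  have himg := Finset.eq_of_subset_of_card_le (Finset.image_subset_iff.mpr hmaps)
    (by rw [Finset.card_image_of_injOn hinj])
  conv_rhs => rw [← himg]
  rw [Finset.sum_image hinj]
  apply Finset.sum_congr rfl
  intro k _
  rw [Int.toNat_of_nonneg (hnn k)]

lemma sums_aux (p : ℕ) : 2 * ∑ k ∈ Finset.range p, (k : ℤ) = p * (p - 1) ∧
    6 * ∑ k ∈ Finset.range p, (k : ℤ) ^ 2 = p * (p - 1) * (2 * p - 1) := by
  induction p with
  | zero => simp
  | succ m ih =>
    rw [Finset.sum_range_succ, Finset.sum_range_succ, mul_add, mul_add, ih.1, ih.2]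
    push_cast
    constructor <;> ring

lemma sum_dlt_aux (p : ℕ) (hp : 0 < p) (g : ℕ → ℤ) :
    ∑ k ∈ Finset.range p, dlt k * g k = g 0 := by
  rw [Finset.sum_eq_single 0]
  · simp [dlt]
  · intro b _ hb
    simp [dlt, hb]
  · intro h0
    simp at h0; omega

lemma key_aux (p : ℕ) (hp : 0 < p) (n : ℕ) (a : ℤ) (h : Int.gcd a p = 1) :
    ∃ M : ℤ, 12 * (p : ℚ) ^ 2 * rademacherSum n a p = M ∧
      (p : ℤ) ^ 2 ∣ a * M - p * (a ^ 2 + 1 + 6 * (n : ℤ) ^ 2) := by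
  let x : ℕ → ℤ := fun k => ((k : ℤ) * a + n) % p
  let q : ℕ → ℤ := fun k => ((k : ℤ) * a + n) / p
  have hx : ∀ k, x k = (k : ℤ) * a + n - p * q k := fun k => by
    have := Int.emod_add_mul_ediv ((k : ℤ) * a + n) p
    simp only [x, q]; linarith
  have hr : 12 * (p : ℚ) ^ 2 * rademacherSum n a p =
      ((3 * ∑ k ∈ Finset.range p, (2 * x k - p + p * dlt (x k)) * (2 * k - p + p * dlt k) : ℤ) : ℚ) := by
    unfold rademacherSum
    rw [Int.cast_mul, Int.cast_sum, Finset.mul_sum, Finset.mul_sum]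
    apply Finset.sum_congr rfl
    intro k hk
    have hk' : k < p := by simpa using hk
    have e1 := saw_aux p hp ((k : ℤ) * a + n)
    have e2 := saw_aux p hp (k : ℤ)
    rw [Int.emod_eq_of_lt (by omega) (by omega)] at e2
    rw [Int.cast_mul, ← e2, ← e1]
    push_cast
    ring
  refine ⟨_, hr, ?_⟩
  obtain ⟨s1, s2⟩ := sums_aux p
  have b1 : ∑ k ∈ Finset.range p, x k = ∑ k ∈ Finset.range p, (k : ℤ) :=
    sum_bij_aux p hp n a h (fun t => t)
  have b2 : ∑ k ∈ Finset.range p, x k ^ 2 = ∑ k ∈ Finset.range p, (k : ℤ) ^ 2 :=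
    sum_bij_aux p hp n a h (fun t => t ^ 2)
  have d0 : ∑ k ∈ Finset.range p, dlt k = 1 := by
    simpa using sum_dlt_aux p hp (fun _ => 1)
  have b3 : ∑ k ∈ Finset.range p, dlt (x k) = 1 := by
    rw [← d0]; exact sum_bij_aux p hp n a h dlt
  have d1 : ∑ k ∈ Finset.range p, dlt k * x k = x 0 := sum_dlt_aux p hp x
  have d2 : ∑ k ∈ Finset.range p, dlt k * dlt (x k) = dlt (x 0) :=
    sum_dlt_aux p hp (fun k => dlt (x k))
  have hK : a * ∑ k ∈ Finset.range p, dlt (x k) * k + n =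
      p * ∑ k ∈ Finset.range p, dlt (x k) * q k := by
    have : ∑ k ∈ Finset.range p, dlt (x k) * ((k : ℤ) * a + n) =
        ∑ k ∈ Finset.range p, dlt (x k) * (p * q k) := by
      apply Finset.sum_congr rfl
      intro k _
      by_cases h0 : x k = 0
      · have := hx k
        rw [show (k : ℤ) * a + n = p * q k by linarith]
      · simp [dlt, h0]
    calc _ = a * ∑ k ∈ Finset.range p, dlt (x k) * k + n * ∑ k ∈ Finset.range p, dlt (x k) := by
          rw [b3]; ring
      _ = ∑ k ∈ Finset.range p, dlt (x k) * ((k : ℤ) * a + n) := by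
          rw [Finset.mul_sum, Finset.mul_sum, ← Finset.sum_add_distrib]
          exact Finset.sum_congr rfl fun k _ => by ring
      _ = _ := by
          rw [this, Finset.mul_sum]
          exact Finset.sum_congr rfl fun k _ => by ring
  have c1 : ∑ k ∈ Finset.range p, x k = a * ∑ k ∈ Finset.range p, (k : ℤ) + n * p
      - p * ∑ k ∈ Finset.range p, q k := by
    rw [Finset.sum_congr rfl fun k _ => hx k]
    simp only [Finset.sum_sub_distrib, Finset.sum_add_distrib, ← Finset.mul_sum, ← Finset.sum_mul,
      Finset.sum_const, Finset.card_range, nsmul_eq_mul]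
    ring
  have c2 : ∑ k ∈ Finset.range p, x k ^ 2 = a ^ 2 * ∑ k ∈ Finset.range p, (k : ℤ) ^ 2
      + 2 * a * n * ∑ k ∈ Finset.range p, (k : ℤ) + p * n ^ 2
      - 2 * p * a * ∑ k ∈ Finset.range p, k * q k - 2 * p * n * ∑ k ∈ Finset.range p, q k
      + p ^ 2 * ∑ k ∈ Finset.range p, q k ^ 2 := by
    have : ∀ k ∈ Finset.range p, x k ^ 2 = a ^ 2 * (k : ℤ) ^ 2 + 2 * a * n * k + n ^ 2
       - 2 * p * a * (k * q k) - 2 * p * n * q k + p ^ 2 * q k ^ 2 := fun k _ => by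
      rw [hx]; ring
    rw [Finset.sum_congr rfl this]
    simp only [Finset.sum_sub_distrib, Finset.sum_add_distrib, ← Finset.mul_sum,
      Finset.sum_const, Finset.card_range, nsmul_eq_mul]
  have c3 : ∑ k ∈ Finset.range p, x k * k = a * ∑ k ∈ Finset.range p, (k : ℤ) ^ 2
      + n * ∑ k ∈ Finset.range p, (k : ℤ) - p * ∑ k ∈ Finset.range p, k * q k := by
    have : ∀ k ∈ Finset.range p, x k * k = a * (k : ℤ) ^ 2 + n * k - p * (k * q k) := fun k _ => by
      rw [hx]; ring
    rw [Finset.sum_congr rfl this]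
    simp only [Finset.sum_sub_distrib, Finset.sum_add_distrib, ← Finset.mul_sum]
  have c4 : ∑ k ∈ Finset.range p, (2 * x k - p + p * dlt (x k)) * (2 * k - p + p * dlt k) =
      4 * ∑ k ∈ Finset.range p, x k * k - 2 * p * ∑ k ∈ Finset.range p, x k
      - 2 * p * ∑ k ∈ Finset.range p, (k : ℤ) + p * p ^ 2
      + 2 * p * ∑ k ∈ Finset.range p, dlt (x k) * k + 2 * p * ∑ k ∈ Finset.range p, dlt k * x k
      - p ^ 2 * ∑ k ∈ Finset.range p, dlt (x k) - p ^ 2 * ∑ k ∈ Finset.range p, dlt k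
      + p ^ 2 * ∑ k ∈ Finset.range p, dlt k * dlt (x k) := by
    have : ∀ k ∈ Finset.range p, (2 * x k - p + p * dlt (x k)) * (2 * k - p + p * dlt k) =
      4 * (x k * k) - 2 * p * x k - 2 * p * (k : ℤ) + p ^ 2
      + 2 * p * (dlt (x k) * k) + 2 * p * (dlt k * x k)
      - p ^ 2 * dlt (x k) - p ^ 2 * dlt k + p ^ 2 * (dlt k * dlt (x k)) := fun k _ => by ring
    rw [Finset.sum_congr rfl this]
    simp only [Finset.sum_sub_distrib, Finset.sum_add_distrib, ← Finset.mul_sum,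
      Finset.sum_const, Finset.card_range, nsmul_eq_mul]
  have x0 : x 0 = n - p * q 0 := by rw [hx]; simp
  rw [c4, d0, b3, d1, d2, b1]
  rw [b1] at c1
  rw [b2] at c2
  generalize dlt (x 0) = D at *
  generalize x 0 = X at *
  generalize q 0 = F at *
  generalize ∑ k ∈ Finset.range p, dlt (x k) * q k = EE at *
  generalize ∑ k ∈ Finset.range p, dlt (x k) * (k : ℤ) = K at *
  generalize ∑ k ∈ Finset.range p, x k * (k : ℤ) = S at *
  generalize ∑ k ∈ Finset.range p, (k : ℤ) * q k = B at *
  generalize ∑ k ∈ Finset.range p, q k ^ 2 = C at *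
  generalize ∑ k ∈ Finset.range p, q k = A at *
  generalize ∑ k ∈ Finset.range p, (k : ℤ) ^ 2 = Q at *
  generalize ∑ k ∈ Finset.range p, (k : ℤ) = σ at *
  generalize (p : ℤ) = P at *
  generalize (n : ℤ) = N at *
  refine ⟨(a^2+1)*(2*P-3) + 6*N*(a-1) - 6*C - 6*a*(P-1)+3*a*P+6*EE-6*a*F-6*a+3*a*D, ?_⟩
  linear_combination 12 * a * c3 - 6 * c2 + 12 * N * c1 + (a^2+1) * s2 + 6*N*(a-1)*s1
    - 6 * a * P * s1 + 6 * P * hK + 6 * P * a * x0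

theorem rademacherSum_eq_imp_of_prime (p : ℕ) (hp : p.Prime) (n : ℕ) (a₁ a₂ : ℤ)
    (h₁ : Int.gcd a₁ p = 1) (h₂ : Int.gcd a₂ p = 1)
    (h : rademacherSum n a₁ p = rademacherSum n a₂ p) :
    a₁ ≡ a₂ [ZMOD (p : ℤ)] ∨ a₁ * a₂ ≡ 1 + 6 * (n : ℤ) ^ 2 [ZMOD (p : ℤ)] := by
  obtain ⟨M, hM, u, hu⟩ := key_aux p hp.pos n a₁ h₁
  obtain ⟨M', hM', v, hv⟩ := key_aux p hp.pos n a₂ h₂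
  have hMM : M = M' := by
    have : (M : ℚ) = M' := by rw [← hM, ← hM', h]
    exact_mod_cast this
  subst hMM
  have hp0 : (p : ℤ) ≠ 0 := by exact_mod_cast hp.ne_zero
  have hd : (p : ℤ) ∣ (a₁ - a₂) * (a₁ * a₂ - (1 + 6 * (n : ℤ) ^ 2)) := by
    refine ⟨a₁ * v - a₂ * u, ?_⟩
    apply mul_left_cancel₀ hp0
    linear_combination a₁ * hv - a₂ * hu
  rcases (Nat.prime_iff_prime_int.mp hp).dvd_or_dvd hd with h' | h'
  · exact Or.inl (Int.modEq_iff_dvd.mpr h').symm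
  · exact Or.inr (Int.modEq_iff_dvd.mpr h').symm
end

section
/- For any non-negative integer n, any positive integer b, and any integer a with gcd(a, b) = 1, the rational number 12·b·rₙ(a, b) is an integer. -/
theorem saw_aux_s4 (b : ℕ) (hb : 0 < b) (m : ℤ) :
    ∃ t : ℤ, 2 * (b : ℚ) * sawtooth ((m : ℚ) / b) = 2 * m + b * t := by
  have hb' : (b : ℚ) ≠ 0 := by positivity
  have hx : (b : ℚ) * ((m : ℚ) / b) = m := by field_simp
  have hf := Int.self_sub_floor ((m : ℚ) / b)
  unfold sawtooth
  split_ifs with h0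
  · refine ⟨-2 * ⌊(m : ℚ) / b⌋, ?_⟩
    rw [h0] at hf
    push_cast
    linear_combination (-2 * (b : ℚ)) * hf + 2 * hx
  · refine ⟨-2 * ⌊(m : ℚ) / b⌋ - 1, ?_⟩
    push_cast
    linear_combination (-2 * (b : ℚ)) * hf + 2 * hx

theorem sum_aux (n : ℕ) (b : ℕ) (hb : 0 < b) (a : ℤ) (N : ℕ) :
    ∃ q : ℤ, 12 * (b : ℚ) ^ 2 * (∑ k ∈ Finset.range N,
      sawtooth (((k : ℚ) * a + n) / b) * sawtooth ((k : ℚ) / b))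
      = 2 * a * (N - 1) * N * (2 * N - 1) + 6 * n * N * (N - 1) + b * q := by
  induction N with
  | zero => exact ⟨0, by simp⟩
  | succ N ih =>
    obtain ⟨q, hq⟩ := ih
    obtain ⟨t, ht⟩ := saw_aux_s4 b hb ((N : ℤ) * a + n)
    obtain ⟨s, hs⟩ := saw_aux_s4 b hb (N : ℤ)
    push_cast at ht hs
    refine ⟨q + 3 * (2 * (N * a + n) * s + 2 * N * t + b * t * s), ?_⟩
    rw [Finset.sum_range_succ, mul_add, hq]
    have := congrArg₂ (· * ·) ht hs
    push_cast
    linear_combination 3 * this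

theorem twelve_mul_rademacherSum_isInt (n : ℕ) (b : ℕ) (hb : 0 < b) (a : ℤ)
    (h : Int.gcd a b = 1) :
    ∃ m : ℤ, 12 * (b : ℚ) * rademacherSum n a b = (m : ℚ) := by
  obtain ⟨q, hq⟩ := sum_aux n b hb a b
  have hb' : (b : ℚ) ≠ 0 := by positivity
  refine ⟨2 * a * (b - 1) * (2 * b - 1) + 6 * n * (b - 1) + q, ?_⟩
  apply mul_left_cancel₀ hb'
  unfold rademacherSum
  push_cast
  linear_combination hq
end

section
/- Let a and b be relatively prime positive integers, and let n be an integer with 1 ≤ n ≤ a + b. Let a' and b' be any integers satisfying a·a' ≡ 1 (mod b) and b·b' ≡ 1 (mod a). Then rₙ(a, b) + rₙ(b, a) = n²/(2ab) − (n/2)·(1/a + 1/b + 1/(ab)) + (1/12)·(b/a + a/b + 1/(ab)) + (1/2)·( ((a'·n/b)) + ((b'·n/a)) + ((n/a)) + ((n/b)) ) + (1/4)·(1 + χ_a(n) + χ_b(n)), where χ_m(n) = 1 if m divides n and χ_m(n) = 0 otherwise. -/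
namespace DR

def g (b : ℕ) (m : ℤ) : ℚ := sawtooth ((m : ℚ) / b)

def chi (b : ℕ) (m : ℤ) : ℚ := if (b : ℤ) ∣ m then 1 else 0

lemma g_eq (b : ℕ) (hb : 0 < b) (m : ℤ) :
    g b m = ((m % (b : ℤ) : ℤ) : ℚ) / b - 1 / 2 + chi b m / 2 := by
  unfold g chi sawtooth
  have hf : Int.fract ((m : ℚ) / b) = ((m % (b : ℤ) : ℤ) : ℚ) / b := by
    rw [Int.fract_div_intCast_eq_div_intCast_mod]
  have hb' : (b : ℚ) ≠ 0 := by positivity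
  rw [hf]
  by_cases h : (b : ℤ) ∣ m
  · have := Int.emod_eq_zero_of_dvd h
    simp [this, h]
  · have h2 : m % (b : ℤ) ≠ 0 := fun h' => h (Int.dvd_of_emod_eq_zero h')
    have h3 : ((m % (b : ℤ) : ℤ) : ℚ) / b ≠ 0 := by
      apply div_ne_zero _ hb'
      exact_mod_cast h2
    rw [if_neg h3, if_neg h]; ring

lemma chi_congr (b : ℕ) {m m' : ℤ} (h : m ≡ m' [ZMOD b]) : chi b m = chi b m' := by
  unfold chi
  have : (b : ℤ) ∣ m ↔ (b : ℤ) ∣ m' := by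
    rw [Int.dvd_iff_emod_eq_zero, Int.dvd_iff_emod_eq_zero, h.eq]
  simp [this]

lemma g_congr (b : ℕ) (hb : 0 < b) {m m' : ℤ} (h : m ≡ m' [ZMOD b]) : g b m = g b m' := by
  rw [g_eq b hb, g_eq b hb, chi_congr b h, h.eq]

lemma g_succ (b : ℕ) (hb : 0 < b) (m : ℤ) :
    g b (m + 1) - g b m = 1 / b - chi b m / 2 - chi b (m + 1) / 2 := by
  rw [g_eq b hb, g_eq b hb]
  have hb' : (b : ℚ) ≠ 0 := by positivity
  have hbz : (0 : ℤ) < b := by exact_mod_cast hb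
  have key : (((m + 1) % (b : ℤ) : ℤ) : ℚ) = ((m % (b : ℤ) : ℤ) : ℚ) + 1 - b * chi b (m + 1) := by
    unfold chi
    have h0 := Int.emod_nonneg m hbz.ne'
    have h1 := Int.emod_lt_of_pos m hbz
    have e : (m + 1) % (b : ℤ) = (m % b + 1) % b := by simp
    by_cases h : (b : ℤ) ∣ m + 1
    · rw [if_pos h]
      have h2 : (m % b + 1) % (b : ℤ) = 0 := by rw [← e]; exact Int.emod_eq_zero_of_dvd h
      have h3 : m % (b : ℤ) + 1 = b := by
        by_contra h4
        rw [Int.emod_eq_of_lt (by omega) (by omega)] at h2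
        omega
      rw [e, h2]
      have h5 : ((m % (b : ℤ) : ℤ) : ℚ) + 1 = b := by exact_mod_cast h3
      push_cast
      linarith
    · rw [if_neg h]
      have h3 : m % (b : ℤ) + 1 ≠ b := by
        intro h4
        apply h
        rw [Int.dvd_iff_emod_eq_zero, e, h4, Int.emod_self]
      rw [e, Int.emod_eq_of_lt (by omega) (by omega)]
      push_cast; ring
  rw [key]
  field_simp
  ring

lemma g_neg (b : ℕ) (hb : 0 < b) (m : ℤ) : g b (-m) = - g b m := by
  rw [g_eq b hb, g_eq b hb]
  have hb' : (b : ℚ) ≠ 0 := by positivity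
  have hbz : (0 : ℤ) < b := by exact_mod_cast hb
  unfold chi
  by_cases h : (b : ℤ) ∣ m
  · have h' : (b : ℤ) ∣ -m := (dvd_neg).2 h
    rw [Int.emod_eq_zero_of_dvd h, Int.emod_eq_zero_of_dvd h', if_pos h, if_pos h']
    norm_num
  · have h' : ¬ (b : ℤ) ∣ -m := fun k => h ((dvd_neg).1 k)
    rw [if_neg h, if_neg h']
    have : (-m) % (b : ℤ) = b - m % b := by
      have h0 := Int.emod_nonneg m hbz.ne'
      have h1 := Int.emod_lt_of_pos m hbz
      have h2 : m % (b : ℤ) ≠ 0 := fun h' => h (Int.dvd_of_emod_eq_zero h')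
      have h3 : (-m) % (b : ℤ) = (b - m % b) % b := by
        apply Int.ModEq.eq
        apply (Int.modEq_iff_dvd).2
        refine ⟨m / b + 1, ?_⟩
        have := Int.emod_add_mul_ediv m b
        linarith
      rw [h3, Int.emod_eq_of_lt (by omega) (by omega)]
    rw [this]
    push_cast
    field_simp
    ring

lemma sum_id (b : ℕ) : ∑ k ∈ Finset.range b, (k : ℚ) = b * (b - 1) / 2 := by
  induction b with
  | zero => simp
  | succ n ih => rw [Finset.sum_range_succ, ih]; push_cast; ring

lemma sum_sq (b : ℕ) : ∑ k ∈ Finset.range b, (k : ℚ) ^ 2 = b * (b - 1) * (2 * b - 1) / 6 := by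
  induction b with
  | zero => simp
  | succ n ih => rw [Finset.sum_range_succ, ih]; push_cast; ring

lemma g_small (b k : ℕ) (hk : k < b) :
    g b k = (k : ℚ) / b - 1 / 2 + if k = 0 then 1 / 2 else 0 := by
  rw [g_eq b (by omega), Int.emod_eq_of_lt (by omega) (by omega)]
  unfold chi
  by_cases h : k = 0
  · simp [h]
  · have : ¬ ((b : ℤ) ∣ (k : ℤ)) := by
      intro h'
      have := Nat.le_of_dvd (by omega) (Int.natCast_dvd_natCast.1 h')
      omega
    simp [h, this]

lemma sum_g (b : ℕ) (hb : 0 < b) : ∑ k ∈ Finset.range b, g b k = 0 := by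
  have hb' : (b : ℚ) ≠ 0 := by positivity
  rw [Finset.sum_congr rfl (fun k hk => g_small b k (Finset.mem_range.1 hk))]
  rw [Finset.sum_add_distrib, Finset.sum_sub_distrib, ← Finset.sum_div, sum_id,
    Finset.sum_ite_eq']
  simp [hb]
  field_simp
  ring

lemma rad_eq (n : ℕ) (a : ℤ) (b : ℕ) :
    rademacherSum n a b = ∑ k ∈ Finset.range b, g b (k * a + n) * g b k := by
  unfold rademacherSum g
  push_cast
  rfl

lemma sum_chi (a b : ℕ) (hb : 0 < b) (a' : ℤ) (ha' : (a : ℤ) * a' ≡ 1 [ZMOD (b : ℤ)]) (n : ℤ) :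
    ∑ k ∈ Finset.range b, chi b (k * a + n) * g b k = - g b (a' * n) := by
  have hbz : (0 : ℤ) < b := by exact_mod_cast hb
  have h0 := Int.emod_nonneg (-(a' * n)) hbz.ne'
  have h1 := Int.emod_lt_of_pos (-(a' * n)) hbz
  obtain ⟨k0, hk0⟩ := Int.eq_ofNat_of_zero_le h0
  have hmod : (k0 : ℤ) ≡ -(a' * n) [ZMOD b] := by
    rw [← hk0]; exact Int.mod_modEq _ _
  rw [Finset.sum_eq_single k0]
  · rw [g_congr b hb hmod, g_neg b hb]
    have : chi b (k0 * a + n) = 1 := by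
      unfold chi
      rw [if_pos]
      apply Int.modEq_zero_iff_dvd.1
      calc (k0 * a + n : ℤ) ≡ -(a' * n) * a + n [ZMOD b] := (hmod.mul_right _).add_right _
        _ = -(a * a') * n + n := by ring
        _ ≡ -1 * n + n [ZMOD b] := ((ha'.neg).mul_right _).add_right _
        _ = 0 := by ring
    rw [this, one_mul]
  · intro k hk hne
    have : chi b (k * a + n) = 0 := by
      unfold chi
      rw [if_neg]
      intro hd
      apply hne
      have hd' := Int.modEq_zero_iff_dvd.2 hd
      have : (k : ℤ) ≡ k0 [ZMOD b] := by
        refine Int.ModEq.trans ?_ hmod.symm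
        calc (k : ℤ) = k * 1 := by ring
          _ ≡ k * (a * a') [ZMOD b] := ha'.symm.mul_left _
          _ = a' * (k * a + n) + -(a' * n) := by ring
          _ ≡ a' * 0 + -(a' * n) [ZMOD b] := (hd'.mul_left _).add_right _
          _ = -(a' * n) := by ring
      have hk' := Finset.mem_range.1 hk
      have e := this.eq
      rw [Int.emod_eq_of_lt (by omega) (by omega), Int.emod_eq_of_lt (by omega) (by omega)] at e
      exact_mod_cast e
    rw [this, zero_mul]
  · intro h
    exfalso
    apply h
    rw [Finset.mem_range]
    rw [hk0] at h1
    exact_mod_cast h1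

lemma rad_succ (a b : ℕ) (hb : 0 < b) (a' : ℤ) (ha' : (a : ℤ) * a' ≡ 1 [ZMOD (b : ℤ)]) (n : ℕ) :
    rademacherSum (n + 1) a b - rademacherSum n a b
      = (g b (a' * n) + g b (a' * (n + 1))) / 2 := by
  rw [rad_eq, rad_eq, ← Finset.sum_sub_distrib]
  have : ∀ k ∈ Finset.range b, g b (k * a + (n + 1 : ℕ)) * g b k - g b (k * a + n) * g b k
      = 1 / b * g b k - (1 / 2) * (chi b (k * a + n) * g b k)
        - (1 / 2) * (chi b (k * a + (n + 1 : ℤ)) * g b k) := by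
    intro k _
    have := g_succ b hb (k * a + n)
    rw [← sub_mul]
    push_cast
    rw [← add_assoc, this]
    ring
  rw [Finset.sum_congr rfl this, Finset.sum_sub_distrib, Finset.sum_sub_distrib,
    ← Finset.mul_sum, ← Finset.mul_sum, ← Finset.mul_sum, sum_g b hb,
    sum_chi a b hb a' ha', sum_chi a b hb a' ha']
  ring

lemma dvd_inv (a b : ℕ) (a' : ℤ) (ha' : (a : ℤ) * a' ≡ 1 [ZMOD (b : ℤ)]) (n : ℤ) :
    (b : ℤ) ∣ a' * n ↔ (b : ℤ) ∣ n := by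
  constructor
  · intro h
    apply Int.modEq_zero_iff_dvd.1
    calc n = 1 * n := by ring
      _ ≡ (a * a') * n [ZMOD b] := ha'.symm.mul_right _
      _ = a * (a' * n) := by ring
      _ ≡ a * 0 [ZMOD b] := (Int.modEq_zero_iff_dvd.2 h).mul_left _
      _ = 0 := by ring
  · intro h
    exact Dvd.dvd.mul_left h _

lemma popov (a b : ℕ) (ha : 0 < a) (hb : 0 < b)
    (hab : Nat.Coprime a b) (n : ℕ) (hn1 : 1 ≤ n) (hn2 : n < a + b)
    (a' b' : ℤ) (ha' : (a : ℤ) * a' ≡ 1 [ZMOD (b : ℤ)])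
    (hb' : (b : ℤ) * b' ≡ 1 [ZMOD (a : ℤ)]) :
    g b (a' * n) + g a (b' * n) = (n : ℚ) / (a * b) - (chi a n + chi b n) / 2 := by
  have haz : (0 : ℤ) < a := by exact_mod_cast ha
  have hbz : (0 : ℤ) < b := by exact_mod_cast hb
  have ha0 : (a : ℚ) ≠ 0 := by positivity
  have hb0 : (b : ℚ) ≠ 0 := by positivity
  have hn1z : (1 : ℤ) ≤ n := by exact_mod_cast hn1
  have hn2z : (n : ℤ) < a + b := by exact_mod_cast hn2
  have e1 : chi b (a' * n) = chi b n := by unfold chi; simp only [dvd_inv a b a' ha']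
  have e2 : chi a (b' * n) = chi a n := by unfold chi; simp only [dvd_inv b a b' hb']
  rw [g_eq b hb, g_eq a ha, e1, e2]
  have x0 := Int.emod_nonneg (a' * n) hbz.ne'
  have x1 := Int.emod_lt_of_pos (a' * n) hbz
  have y0 := Int.emod_nonneg (b' * n) haz.ne'
  have y1 := Int.emod_lt_of_pos (b' * n) haz
  have xm : (a' * n) % (b : ℤ) ≡ a' * n [ZMOD b] := Int.mod_modEq _ _
  have ym : (b' * n) % (a : ℤ) ≡ b' * n [ZMOD a] := Int.mod_modEq _ _
  have xz : (a' * n) % (b : ℤ) = 0 ↔ (b : ℤ) ∣ n := by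
    rw [← dvd_inv a b a' ha', Int.dvd_iff_emod_eq_zero]
  have yz : (b' * n) % (a : ℤ) = 0 ↔ (a : ℤ) ∣ n := by
    rw [← dvd_inv b a b' hb', Int.dvd_iff_emod_eq_zero]
  generalize (a' * n) % (b : ℤ) = x at *
  generalize (b' * n) % (a : ℤ) = y at *
  have d1 : (b : ℤ) ∣ a * x + b * y - n := by
    apply Int.modEq_zero_iff_dvd.1
    calc a * x + b * y - n ≡ a * (a' * n) + 0 * y - n [ZMOD b] := by
          refine ((xm.mul_left _).add (Int.ModEq.mul_right _ ?_)).sub_right _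
          exact Int.modEq_zero_iff_dvd.2 dvd_rfl
      _ = (a * a') * n - n := by ring
      _ ≡ 1 * n - n [ZMOD b] := (ha'.mul_right _).sub_right _
      _ = 0 := by ring
  have d2 : (a : ℤ) ∣ a * x + b * y - n := by
    apply Int.modEq_zero_iff_dvd.1
    calc a * x + b * y - n ≡ 0 * x + b * (b' * n) - n [ZMOD a] := by
          refine ((Int.ModEq.mul_right _ ?_).add (ym.mul_left _)).sub_right _
          exact Int.modEq_zero_iff_dvd.2 dvd_rfl
      _ = (b * b') * n - n := by ring
      _ ≡ 1 * n - n [ZMOD a] := (hb'.mul_right _).sub_right _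
      _ = 0 := by ring
  obtain ⟨t, ht⟩ := IsCoprime.mul_dvd (Nat.isCoprime_iff_coprime.2 hab) d2 d1
  have hA : (a : ℤ) * x + a ≤ a * b := by nlinarith
  have hB : (b : ℤ) * y + b ≤ a * b := by nlinarith
  have hax : 0 ≤ (a : ℤ) * x := by positivity
  have hby : 0 ≤ (b : ℤ) * y := by positivity
  have hP : (0 : ℤ) < a * b := by positivity
  have hPa : (a : ℤ) ≤ a * b := by nlinarith
  have hPb : (b : ℤ) ≤ a * b := by nlinarith
  have key : (a : ℚ) * x + b * y = n + a * b - a * b * (chi a n + chi b n) := by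
    unfold chi
    by_cases h1 : (a : ℤ) ∣ n <;> by_cases h2 : (b : ℤ) ∣ n
    · have hx := xz.2 h2
      have hy := yz.2 h1
      subst hx hy
      have t1 : -2 < t := by
        by_contra hc
        have : (a * b : ℤ) * t ≤ a * b * (-2) := mul_le_mul_of_nonneg_left (by omega) hP.le
        linarith
      have t2 : t < 0 := by
        by_contra hc
        have : 0 ≤ (a * b : ℤ) * t := mul_nonneg hP.le (by omega)
        linarith
      have tt : t = -1 := by omega
      subst tt
      have : (n : ℤ) = a * b := by linarith
      have : (n : ℚ) = a * b := by exact_mod_cast this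
      simp [h1, h2, this]; ring
    · have hy := yz.2 h1
      have hx : x ≠ 0 := fun h => h2 (xz.1 h)
      have hx1 : 1 ≤ x := by omega
      have hxa : (a : ℤ) ≤ a * x := by nlinarith
      subst hy
      have t1 : -1 < t := by
        by_contra hc
        have : (a * b : ℤ) * t ≤ a * b * (-1) := mul_le_mul_of_nonneg_left (by omega) hP.le
        linarith
      have t2 : t < 1 := by
        by_contra hc
        have : (a * b : ℤ) * 1 ≤ a * b * t := mul_le_mul_of_nonneg_left (by omega) hP.le
        linarith
      have tt : t = 0 := by omega
      subst tt
      have : (a : ℤ) * x = n := by linarith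
      have : (a : ℚ) * x = n := by exact_mod_cast this
      simp [h1, h2, this]
    · have hx := xz.2 h2
      have hy : y ≠ 0 := fun h => h1 (yz.1 h)
      have hy1 : 1 ≤ y := by omega
      have hyb : (b : ℤ) ≤ b * y := by nlinarith
      subst hx
      have t1 : -1 < t := by
        by_contra hc
        have : (a * b : ℤ) * t ≤ a * b * (-1) := mul_le_mul_of_nonneg_left (by omega) hP.le
        linarith
      have t2 : t < 1 := by
        by_contra hc
        have : (a * b : ℤ) * 1 ≤ a * b * t := mul_le_mul_of_nonneg_left (by omega) hP.le
        linarith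
      have tt : t = 0 := by omega
      subst tt
      have : (b : ℤ) * y = n := by linarith
      have : (b : ℚ) * y = n := by exact_mod_cast this
      simp [h1, h2, this]
    · have hy : y ≠ 0 := fun h => h1 (yz.1 h)
      have hy1 : 1 ≤ y := by omega
      have hyb : (b : ℤ) ≤ b * y := by nlinarith
      have hx : x ≠ 0 := fun h => h2 (xz.1 h)
      have hx1 : 1 ≤ x := by omega
      have hxa : (a : ℤ) ≤ a * x := by nlinarith
      have t1 : 0 < t := by
        by_contra hc
        have : (a * b : ℤ) * t ≤ a * b * 0 := mul_le_mul_of_nonneg_left (by omega) hP.le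
        linarith
      have t2 : t < 2 := by
        by_contra hc
        have : (a * b : ℤ) * 2 ≤ a * b * t := mul_le_mul_of_nonneg_left (by omega) hP.le
        linarith
      have tt : t = 1 := by omega
      subst tt
      have : (a : ℤ) * x + b * y = n + a * b := by linarith
      have : (a : ℚ) * x + b * y = n + a * b := by exact_mod_cast this
      simp [h1, h2, this]
  field_simp
  linear_combination 2 * key

/-! Dedekind reciprocity. -/

lemma sum_perm (a b : ℕ) (hb : 0 < b) (hab : Nat.Coprime a b) (h : ℕ → ℚ) :
    ∑ k ∈ Finset.range b, h (k * a % b) = ∑ k ∈ Finset.range b, h k := by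
  have inj : Set.InjOn (fun k => k * a % b) (Finset.range b : Finset ℕ) := by
    intro x hx y hy hxy
    have hx' := Finset.mem_range.1 (Finset.mem_coe.1 hx)
    have hy' := Finset.mem_range.1 (Finset.mem_coe.1 hy)
    have : x * a ≡ y * a [MOD b] := hxy
    have := Nat.ModEq.cancel_right_of_coprime (by rw [Nat.gcd_comm]; exact hab) this
    exact Nat.ModEq.eq_of_lt_of_lt this hx' hy'
  have him : (Finset.range b).image (fun k => k * a % b) = Finset.range b := by
    apply Finset.eq_of_subset_of_card_le
    · intro x hx
      obtain ⟨y, _, rfl⟩ := Finset.mem_image.1 hx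
      exact Finset.mem_range.2 (Nat.mod_lt _ hb)
    · rw [Finset.card_image_of_injOn inj]
  conv_rhs => rw [← him]
  rw [Finset.sum_image inj]

lemma natmod_q (a b k : ℕ) : ((k * a % b : ℕ) : ℚ) = k * a - b * (k * a / b : ℕ) := by
  have := Nat.mod_add_div (k * a) b
  have : ((k * a % b : ℕ) : ℚ) + b * (k * a / b : ℕ) = k * a := by exact_mod_cast this
  linarith

def A (a b : ℕ) : ℚ := ∑ k ∈ Finset.range b, (k : ℚ) * (k * a / b : ℕ)
def F (a b : ℕ) : ℚ := ∑ k ∈ Finset.range b, ((k * a / b : ℕ) : ℚ) ^ 2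
def Q (a b : ℕ) : ℚ := ∑ k ∈ Finset.range b, ((k * a / b : ℕ) : ℚ)

lemma Q_eq (a b : ℕ) (hb : 0 < b) (hab : Nat.Coprime a b) :
    Q a b = (a - 1) * (b - 1) / 2 := by
  have hb0 : (b : ℚ) ≠ 0 := by positivity
  have h := sum_perm a b hb hab (fun k => (k : ℚ))
  simp only [natmod_q] at h
  rw [Finset.sum_sub_distrib, ← Finset.sum_mul, ← Finset.mul_sum, sum_id] at h
  change _ - b * Q a b = _ at h
  apply mul_left_cancel₀ hb0
  linear_combination -h

lemma sq_eq (a b : ℕ) (hb : 0 < b) (hab : Nat.Coprime a b) :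
    (a : ℚ) ^ 2 * (b * (b - 1) * (2 * b - 1) / 6) - 2 * a * b * A a b + b ^ 2 * F a b
      = b * (b - 1) * (2 * b - 1) / 6 := by
  have h := sum_perm a b hb hab (fun k => (k : ℚ) ^ 2)
  simp only [natmod_q] at h
  rw [sum_sq] at h
  trans ∑ x ∈ Finset.range b, ((x : ℚ) * a - b * (x * a / b : ℕ)) ^ 2
  swap
  · exact h
  rw [← sum_sq, A, F, Finset.mul_sum, Finset.mul_sum, Finset.mul_sum,
    ← Finset.sum_sub_distrib, ← Finset.sum_add_distrib]
  apply Finset.sum_congr rfl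
  intro k _
  ring

lemma swap_eq (a b : ℕ) (ha : 0 < a) (hb : 0 < b) (hab : Nat.Coprime a b) :
    A a b = (a - 1) * (b * (b - 1) / 2) - F b a / 2 - Q b a / 2 := by
  have h1 : ∀ k ∈ Finset.range b, ((k * a / b : ℕ) : ℚ)
      = ∑ j ∈ Finset.Ico 1 a, if j * b ≤ k * a then (1 : ℚ) else 0 := by
    intro k hk
    have hk' := Finset.mem_range.1 hk
    rw [Finset.sum_boole]
    congr 1
    have : (Finset.Ico 1 a).filter (fun j => j * b ≤ k * a) = Finset.Ico 1 (k * a / b + 1) := by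
      ext j
      simp only [Finset.mem_filter, Finset.mem_Ico, Nat.lt_succ_iff, Nat.le_div_iff_mul_le hb]
      constructor
      · rintro ⟨⟨h1, _⟩, h2⟩; exact ⟨h1, h2⟩
      · rintro ⟨h1, h2⟩
        refine ⟨⟨h1, ?_⟩, h2⟩
        by_contra hc
        have : a * b ≤ j * b := Nat.mul_le_mul_right _ (by omega)
        have : k * a < b * a := Nat.mul_lt_mul_of_pos_right hk' ha
        linarith [Nat.mul_comm a b]
    rw [this]; simp
  have h2 : ∀ j ∈ Finset.Ico 1 a,
      ∑ k ∈ Finset.range b, (k : ℚ) * (if j * b ≤ k * a then (1 : ℚ) else 0)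
      = b * (b - 1) / 2 - ((j * b / a : ℕ) : ℚ) ^ 2 / 2 - ((j * b / a : ℕ) : ℚ) / 2 := by
    intro j hj
    obtain ⟨hj1, hj2⟩ := Finset.mem_Ico.1 hj
    have hfb : j * b / a < b := by
      rw [Nat.div_lt_iff_lt_mul ha, Nat.mul_comm b a]
      exact Nat.mul_lt_mul_of_pos_right hj2 hb
    have e : ∀ k ∈ Finset.range b, (k : ℚ) * (if j * b ≤ k * a then (1 : ℚ) else 0)
        = k - if k ≤ j * b / a then (k : ℚ) else 0 := by
      intro k _
      simp only [Nat.le_div_iff_mul_le ha]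
      have hne : j * b ≠ k * a := by
        intro he
        have : a ∣ j * b := ⟨k, by rw [he]; ring⟩
        have := Nat.le_of_dvd hj1 (hab.dvd_of_dvd_mul_right this)
        omega
      by_cases hc : j * b ≤ k * a
      · rw [if_pos hc, if_neg (by omega)]; ring
      · rw [if_neg hc, if_pos (by omega)]; ring
    rw [Finset.sum_congr rfl e, Finset.sum_sub_distrib, sum_id, ← Finset.sum_filter]
    have : (Finset.range b).filter (fun k => k ≤ j * b / a) = Finset.range (j * b / a + 1) := by
      ext k
      simp only [Finset.mem_filter, Finset.mem_range]
      omega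
    rw [this, sum_id]
    push_cast
    ring
  unfold A
  rw [Finset.sum_congr rfl (fun k hk => by rw [h1 k hk, Finset.mul_sum]), Finset.sum_comm,
    Finset.sum_congr rfl h2]
  have hF : F b a = ∑ j ∈ Finset.Ico 1 a, ((j * b / a : ℕ) : ℚ) ^ 2 := by
    unfold F
    rw [Finset.range_eq_Ico, Finset.sum_eq_sum_Ico_succ_bot ha]
    simp
  have hQ : Q b a = ∑ j ∈ Finset.Ico 1 a, ((j * b / a : ℕ) : ℚ) := by
    unfold Q
    rw [Finset.range_eq_Ico, Finset.sum_eq_sum_Ico_succ_bot ha]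
    simp
  rw [Finset.sum_sub_distrib, Finset.sum_sub_distrib, ← Finset.sum_div, ← Finset.sum_div,
    ← Finset.sum_div, ← hF, ← hQ, Finset.sum_const, Nat.card_Ico, nsmul_eq_mul, Nat.cast_sub ha]
  push_cast
  ring

lemma rad0 (a b : ℕ) (hb : 0 < b) (hab : Nat.Coprime a b) :
    rademacherSum 0 a b = (a : ℚ) * ((b - 1) * (2 * b - 1)) / (6 * b) - A a b / b
      - (b - 1) / 2 + b / 4 - 1 / 4 := by
  have hb0 : (b : ℚ) ≠ 0 := by positivity
  rw [rad_eq]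
  have e : ∀ k ∈ Finset.range b, g b (k * a + (0 : ℕ)) * g b k
      = (a : ℚ) / b ^ 2 * k ^ 2 - 1 / b * (k * (k * a / b : ℕ)) - 1 / (2 * b) * (k * a % b : ℕ)
        - 1 / (2 * b) * k + 1 / 4 - if k = 0 then 1 / 4 else 0 := by
    intro k hk
    have hk' := Finset.mem_range.1 hk
    have h1 : g b (k * a + (0 : ℕ)) = g b (k * a % b : ℕ) := by
      apply g_congr b hb
      push_cast
      rw [add_zero]
      exact (Int.mod_modEq _ _).symm
    rw [h1, g_small b _ (Nat.mod_lt _ hb), g_small b k hk']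
    by_cases h0 : k = 0
    · subst h0; simp
    · have : k * a % b ≠ 0 := by
        intro h
        have := Nat.le_of_dvd (by omega) (hab.symm.dvd_of_dvd_mul_right (Nat.dvd_of_mod_eq_zero h))
        omega
      rw [if_neg h0, if_neg h0, if_neg this, natmod_q]
      field_simp
      ring
  rw [Finset.sum_congr rfl e]
  simp only [Finset.sum_sub_distrib, Finset.sum_add_distrib, ← Finset.mul_sum]
  rw [sum_perm a b hb hab (fun k => (k : ℚ)), sum_id, sum_sq, Finset.sum_ite_eq']
  change _ - 1 / (b : ℚ) * A a b - _ - _ + _ - _ = _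
  simp only [Finset.mem_range, hb, if_true, Finset.sum_const, Finset.card_range, nsmul_eq_mul]
  field_simp
  ring

lemma dedekind (a b : ℕ) (ha : 0 < a) (hb : 0 < b) (hab : Nat.Coprime a b) :
    rademacherSum 0 a b + rademacherSum 0 b a
      = (1 / 12) * ((b : ℚ) / a + (a : ℚ) / b + 1 / (a * b)) - 1 / 4 := by
  have ha0 : (a : ℚ) ≠ 0 := by positivity
  have hb0 : (b : ℚ) ≠ 0 := by positivity
  rw [rad0 a b hb hab, rad0 b a ha hab.symm]
  have h1 := swap_eq a b ha hb hab
  have h2 := Q_eq b a ha hab.symm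
  have h3 := sq_eq b a ha hab.symm
  rw [h2] at h1
  have h4 : A b a = ((b : ℚ) ^ 2 * (a * (a - 1) * (2 * a - 1) / 6) + a ^ 2 * F b a
      - a * (a - 1) * (2 * a - 1) / 6) / (2 * a * b) := by
    rw [eq_div_iff (by positivity)]
    linear_combination -h3
  rw [h1, h4]
  field_simp
  ring

end DR

open DR in
theorem rademacherSum_reciprocity (a b : ℕ) (ha : 0 < a) (hb : 0 < b)
    (hab : Nat.Coprime a b) (n : ℕ) (hn1 : 1 ≤ n) (hn2 : n ≤ a + b)
    (a' b' : ℤ) (ha' : (a : ℤ) * a' ≡ 1 [ZMOD (b : ℤ)])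
    (hb' : (b : ℤ) * b' ≡ 1 [ZMOD (a : ℤ)]) :
    rademacherSum n a b + rademacherSum n b a =
      (n : ℚ) ^ 2 / (2 * a * b)
        - ((n : ℚ) / 2) * (1 / a + 1 / b + 1 / (a * b))
        + (1 / 12) * ((b : ℚ) / a + (a : ℚ) / b + 1 / (a * b))
        + (1 / 2) * (sawtooth ((a' : ℚ) * n / b) + sawtooth ((b' : ℚ) * n / a)
            + sawtooth ((n : ℚ) / a) + sawtooth ((n : ℚ) / b))
        + (1 / 4) * (1 + (if a ∣ n then (1 : ℚ) else 0)
            + (if b ∣ n then (1 : ℚ) else 0)) := by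
  have hχ : ∀ m k : ℕ, (if m ∣ k then (1 : ℚ) else 0) = chi m k := by
    intro m k; unfold chi; simp only [Int.natCast_dvd_natCast]
  have e1 : ∀ k : ℕ, sawtooth ((a' : ℚ) * k / b) = g b (a' * k) := by
    intro k; unfold g; push_cast; rfl
  have e2 : ∀ k : ℕ, sawtooth ((b' : ℚ) * k / a) = g a (b' * k) := by
    intro k; unfold g; push_cast; rfl
  have e3 : ∀ m k : ℕ, sawtooth ((k : ℚ) / m) = g m k := by
    intro m k; unfold g; push_cast; rfl
  have ha0 : (a : ℚ) ≠ 0 := by positivity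
  have hb0 : (b : ℚ) ≠ 0 := by positivity
  simp only [hχ, e1, e2, e3]
  induction n, hn1 using Nat.le_induction with
  | base =>
    have h0 := dedekind a b ha hb hab
    have h1 := rad_succ a b hb a' ha' 0
    have h2 := rad_succ b a ha b' hb' 0
    have h3 := g_succ a ha 0
    have h4 := g_succ b hb 0
    have z1 : ∀ m, g m 0 = 0 := by intro m; simp [g, sawtooth]
    have z2 : ∀ m, chi m 0 = 1 := by intro m; simp [chi]
    simp only [z1, z2, zero_add, Nat.cast_zero, mul_zero] at h1 h2 h3 h4
    simp only [Nat.cast_one]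
    linear_combination h0 + h1 + h2 - h3 / 2 - h4 / 2
  | succ n hn ih =>
    have ih := ih (by omega)
    have h1 := rad_succ a b hb a' ha' n
    have h2 := rad_succ b a ha b' hb' n
    have h3 := g_succ a ha n
    have h4 := g_succ b hb n
    have h5 := popov a b ha hb hab n hn (by omega) a' b' ha' hb'
    push_cast
    linear_combination ih + h1 + h2 - h3 / 2 - h4 / 2 + h5
end

section
/- For any positive integer b and any integer a with gcd(a, b) = 1, the rational number 6·b·s(a, b) is an integer. -/
theorem sawtooth_add_int (x : ℚ) (n : ℤ) : sawtooth (x + n) = sawtooth x := by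
  simp [sawtooth]

theorem sawtooth_neg (x : ℚ) : sawtooth (-x) = -sawtooth x := by
  unfold sawtooth
  by_cases hx : Int.fract x = 0
  · have : Int.fract (-x) = 0 := Int.fract_neg_eq_zero.mpr hx
    simp [hx, this]
  · have h2 : ¬ Int.fract (-x) = 0 := fun h => hx (Int.fract_neg_eq_zero.mp h)
    rw [if_neg hx, if_neg h2, Int.fract_neg hx]
    ring

theorem sum_sawtooth (b : ℕ) (hb : 0 < b) (a : ℤ) :
    ∑ k ∈ Finset.range b, sawtooth ((k : ℚ) * a / b) = 0 := by
  obtain ⟨c, rfl⟩ : ∃ c, b = c + 1 := ⟨b - 1, by omega⟩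
  rw [Finset.sum_range_succ']
  have h0 : sawtooth (((0 : ℕ) : ℚ) * a / ((c + 1 : ℕ) : ℚ)) = 0 := by simp [sawtooth]
  rw [h0, add_zero]
  have hr := Finset.sum_range_reflect
    (fun k : ℕ => sawtooth (((k + 1 : ℕ) : ℚ) * a / ((c + 1 : ℕ) : ℚ))) c
  have hn : ∑ j ∈ Finset.range c, sawtooth (((c - 1 - j + 1 : ℕ) : ℚ) * a / ((c + 1 : ℕ) : ℚ))
      = ∑ j ∈ Finset.range c, -sawtooth (((j + 1 : ℕ) : ℚ) * a / ((c + 1 : ℕ) : ℚ)) := by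
    refine Finset.sum_congr rfl fun j hj => ?_
    have hj' := Finset.mem_range.mp hj
    have e : c - 1 - j + 1 = c - j := by omega
    rw [e, ← sawtooth_neg, ← sawtooth_add_int (-_) a]
    congr 1
    have : (c : ℚ) + 1 ≠ 0 := by positivity
    push_cast [Nat.cast_sub hj'.le]
    field_simp
    ring
  rw [Finset.sum_neg_distrib] at hn
  have := hr.symm.trans hn
  linarith

theorem term_int (a : ℤ) (b k : ℕ) :
    ∃ m : ℤ, 6 * (k : ℚ) * sawtooth ((k : ℚ) * a / b) = 6 * a * (k : ℚ) ^ 2 / b + m := by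
  unfold sawtooth
  have hf := Int.self_sub_floor ((k : ℚ) * a / b)
  split_ifs with h0
  · refine ⟨-6 * k * ⌊(k : ℚ) * a / b⌋, ?_⟩
    rw [h0] at hf
    push_cast
    linear_combination (-6 * (k : ℚ)) * hf
  · refine ⟨-6 * k * ⌊(k : ℚ) * a / b⌋ - 3 * k, ?_⟩
    push_cast
    linear_combination (-6 * (k : ℚ)) * hf

theorem sum_sq (b : ℕ) :
    ∑ k ∈ Finset.range b, 6 * (k : ℚ) ^ 2 = (b : ℚ) * (b - 1) * (2 * b - 1) := by
  induction b with
  | zero => simp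
  | succ n ih => rw [Finset.sum_range_succ, ih]; push_cast; ring

theorem six_mul_dedekindSum_isInt (b : ℕ) (hb : 0 < b) (a : ℤ)
    (h : Int.gcd a b = 1) :
    ∃ m : ℤ, 6 * (b : ℚ) * dedekindSum a b = (m : ℚ) := by
  have hb0 : (b : ℚ) ≠ 0 := by positivity
  choose m hm using term_int a b
  refine ⟨a * (b - 1) * (2 * b - 1) + ∑ k ∈ Finset.range b, m k, ?_⟩
  have key : ∀ k ∈ Finset.range b,
      6 * (b : ℚ) * (sawtooth ((k : ℚ) * a / b) * sawtooth ((k : ℚ) / b))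
      = (a / b * (6 * (k : ℚ) ^ 2) + m k) - 3 * b * sawtooth ((k : ℚ) * a / b) := by
    intro k hk
    have hk' := Finset.mem_range.mp hk
    have e : a / b * (6 * (k : ℚ) ^ 2) + m k = 6 * (k : ℚ) * sawtooth ((k : ℚ) * a / b) := by
      rw [hm]; ring
    rw [e]
    rcases Nat.eq_zero_or_pos k with rfl | hp
    · simp [sawtooth]
    · have hfr : Int.fract ((k : ℚ) / b) = (k : ℚ) / b := by
        rw [Int.fract_eq_self]
        refine ⟨by positivity, ?_⟩
        rw [div_lt_one (by positivity)]
        exact_mod_cast hk'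
      have hne : (k : ℚ) / b ≠ 0 := by positivity
      have hs : sawtooth ((k : ℚ) / b) = (k : ℚ) / b - 1 / 2 := by
        unfold sawtooth
        rw [hfr, if_neg hne]
      rw [hs]
      field_simp
      ring
  unfold dedekindSum
  rw [Finset.mul_sum, Finset.sum_congr rfl key, Finset.sum_sub_distrib, Finset.sum_add_distrib,
    ← Finset.mul_sum, sum_sq, ← Finset.mul_sum, sum_sawtooth b hb a]
  push_cast
  field_simp
  ring
end

section
/- For any relatively prime positive integers a and b, one has 12·a·b·(s(a, b) + s(b, a)) = −3·a·b + a² + b² + 1. -/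
theorem perm_sum (a b : ℕ) (hb : 0 < b) (hab : Nat.Coprime a b) (f : ℕ → ℚ) :
    ∑ k ∈ Finset.range b, f (k * a % b) = ∑ k ∈ Finset.range b, f k := by
  have hinj : Set.InjOn (fun k => k * a % b) (Finset.range b : Set ℕ) := by
    intro x hx y hy h
    simp only [Finset.coe_range, Set.mem_Iio] at hx hy
    have h1 : x * a ≡ y * a [MOD b] := h
    have h2 : x ≡ y [MOD b] := Nat.ModEq.cancel_right_of_coprime (by rw [Nat.gcd_comm]; exact hab) h1
    exact Nat.ModEq.eq_of_lt_of_lt h2 hx hy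
  have himg : (Finset.range b).image (fun k => k * a % b) = Finset.range b := by
    apply Finset.eq_of_subset_of_card_le
    · intro x hx
      obtain ⟨y, _, rfl⟩ := Finset.mem_image.1 hx
      exact Finset.mem_range.2 (Nat.mod_lt _ hb)
    · rw [Finset.card_image_of_injOn hinj]
  conv_rhs => rw [← himg]
  rw [Finset.sum_image hinj]

theorem sawtooth_nat (m b : ℕ) (hb : 0 < b) (h : ¬ b ∣ m) :
    sawtooth ((m : ℚ) / b) = ((m % b : ℕ) : ℚ) / b - 1 / 2 := by
  have hf : Int.fract ((m : ℚ) / b) = ((m % b : ℕ) : ℚ) / b :=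
    Int.fract_div_natCast_eq_div_natCast_mod
  have : ((m % b : ℕ) : ℚ) / b ≠ 0 := by
    have h1 : m % b ≠ 0 := fun h0 => h (Nat.dvd_of_mod_eq_zero h0)
    positivity
  rw [sawtooth, hf, if_neg this]

theorem sum_one (b : ℕ) : ∑ k ∈ Finset.range b, (k : ℚ) = b * (b - 1) / 2 := by
  induction b with
  | zero => simp
  | succ n ih => rw [Finset.sum_range_succ, ih]; push_cast; ring

theorem sum_two (b : ℕ) :
    ∑ k ∈ Finset.range b, (k : ℚ) ^ 2 = b * (b - 1) * (2 * b - 1) / 6 := by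
  induction b with
  | zero => simp
  | succ n ih => rw [Finset.sum_range_succ, ih]; push_cast; ring

theorem rem_eq (m b : ℕ) : ((m % b : ℕ) : ℚ) = m - b * ((m / b : ℕ) : ℚ) := by
  have := Nat.mod_add_div m b
  have h2 : ((m % b : ℕ) : ℚ) + b * ((m / b : ℕ) : ℚ) = m := by exact_mod_cast this
  linarith

theorem ded_eq_s7 (a b : ℕ) (hb : 0 < b) (hab : Nat.Coprime a b) :
    (b : ℚ) * dedekindSum a b = a * ((b - 1) * (2 * b - 1) / 6)
      - ∑ k ∈ Finset.range b, (k : ℚ) * ((k * a / b : ℕ) : ℚ) - b * (b - 1) / 4 := by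
  have hb0 : (b : ℚ) ≠ 0 := by positivity
  have h1 : dedekindSum a b = ∑ k ∈ Finset.range b,
      ((((k * a % b : ℕ) : ℚ) / b - 1 / 2) * ((k : ℚ) / b - 1 / 2)
        - if k = 0 then 1 / 4 else 0) := by
    unfold dedekindSum
    apply Finset.sum_congr rfl
    intro k hk
    rw [Finset.mem_range] at hk
    rcases Nat.eq_zero_or_pos k with rfl | hk0
    · simp [sawtooth]; norm_num
    · have hd : ¬ b ∣ k := Nat.not_dvd_of_pos_of_lt hk0 hk
      have hd2 : ¬ b ∣ k * a := fun h => hd (hab.symm.dvd_of_dvd_mul_right h)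
      have e1 := sawtooth_nat (k * a) b hb hd2
      have e2 := sawtooth_nat k b hb hd
      rw [Nat.mod_eq_of_lt hk] at e2
      push_cast at e1 ⊢
      rw [e1, e2, if_neg hk0.ne', sub_zero]
  have hr := perm_sum a b hb hab (fun n => (n : ℚ))
  have h2 : dedekindSum a b = (a / b ^ 2) * ∑ k ∈ Finset.range b, (k : ℚ) ^ 2
      - (1 / b) * ∑ k ∈ Finset.range b, (k : ℚ) * ((k * a / b : ℕ) : ℚ)
      - 1 / (2 * b) * ∑ k ∈ Finset.range b, ((k * a % b : ℕ) : ℚ)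
      - 1 / (2 * b) * ∑ k ∈ Finset.range b, (k : ℚ) + b / 4 - 1 / 4 := by
    rw [h1, Finset.sum_sub_distrib, Finset.sum_ite_eq' , if_pos (Finset.mem_range.2 hb)]
    have : (b : ℚ) / 4 = ∑ k ∈ Finset.range b, (1 / 4 : ℚ) := by simp; ring
    rw [this]
    simp only [Finset.mul_sum]
    rw [← Finset.sum_sub_distrib, ← Finset.sum_sub_distrib, ← Finset.sum_sub_distrib,
      ← Finset.sum_add_distrib]
    congr 1
    apply Finset.sum_congr rfl
    intro k _
    rw [rem_eq]
    push_cast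
    field_simp
    ring
  rw [h2, hr, sum_one, sum_two]
  field_simp
  ring

theorem sq_eq (a b : ℕ) (hb : 0 < b) (hab : Nat.Coprime a b) :
    ((a : ℚ) ^ 2 - 1) * (b * (b - 1) * (2 * b - 1) / 6)
      - 2 * a * b * ∑ k ∈ Finset.range b, (k : ℚ) * ((k * a / b : ℕ) : ℚ)
      + b ^ 2 * ∑ k ∈ Finset.range b, ((k * a / b : ℕ) : ℚ) ^ 2 = 0 := by
  have hr := perm_sum a b hb hab (fun n => (n : ℚ) ^ 2)
  have h : ∑ k ∈ Finset.range b, ((k * a % b : ℕ) : ℚ) ^ 2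
      = a ^ 2 * ∑ k ∈ Finset.range b, (k : ℚ) ^ 2
      - 2 * a * b * ∑ k ∈ Finset.range b, (k : ℚ) * ((k * a / b : ℕ) : ℚ)
      + b ^ 2 * ∑ k ∈ Finset.range b, ((k * a / b : ℕ) : ℚ) ^ 2 := by
    simp only [Finset.mul_sum]
    rw [← Finset.sum_sub_distrib, ← Finset.sum_add_distrib]
    apply Finset.sum_congr rfl
    intro k _
    rw [rem_eq]
    push_cast
    ring
  rw [h, sum_two] at hr
  linarith

theorem lin_eq (a b : ℕ) (hb : 0 < b) (hab : Nat.Coprime a b) :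
    ∑ k ∈ Finset.range b, ((k * a / b : ℕ) : ℚ) = (a - 1) * (b - 1) / 2 := by
  have hb0 : (b : ℚ) ≠ 0 := by positivity
  have hr := perm_sum a b hb hab (fun n => (n : ℚ))
  have h : ∑ k ∈ Finset.range b, ((k * a % b : ℕ) : ℚ)
      = a * ∑ k ∈ Finset.range b, (k : ℚ)
      - b * ∑ k ∈ Finset.range b, ((k * a / b : ℕ) : ℚ) := by
    simp only [Finset.mul_sum]
    rw [← Finset.sum_sub_distrib]
    apply Finset.sum_congr rfl
    intro k _
    rw [rem_eq]
    push_cast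
    ring
  rw [h, sum_one] at hr
  apply mul_left_cancel₀ hb0
  linarith

theorem lattice (a b : ℕ) (ha : 0 < a) (hb : 0 < b) (hab : Nat.Coprime a b) :
    ∑ k ∈ Finset.range b, (((k * a / b : ℕ) : ℚ) ^ 2 + ((k * a / b : ℕ) : ℚ))
      = (b - 1) * (a * (a - 1))
        - 2 * ∑ j ∈ Finset.range a, (j : ℚ) * ((j * b / a : ℕ) : ℚ) := by
  have h1 : ∀ k ∈ Finset.range b, (((k * a / b : ℕ) : ℚ) ^ 2 + ((k * a / b : ℕ) : ℚ))
      = ∑ j ∈ Finset.range a, if j * b ≤ k * a then 2 * (j : ℚ) else 0 := by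
    intro k hk
    rw [Finset.mem_range] at hk
    rw [← Finset.sum_filter]
    have : (Finset.range a).filter (fun j => j * b ≤ k * a) = Finset.range (k * a / b + 1) := by
      ext j
      simp only [Finset.mem_filter, Finset.mem_range, Nat.lt_succ_iff, Nat.le_div_iff_mul_le hb]
      constructor
      · exact fun h => h.2
      · intro h
        refine ⟨?_, h⟩
        by_contra hj
        push Not at hj
        nlinarith
    rw [this, ← Finset.mul_sum, sum_one]
    push_cast
    ring
  have h2 : ∀ j ∈ Finset.range a, ∑ k ∈ Finset.range b, (if j * b ≤ k * a then 2 * (j : ℚ) else 0)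
      = 2 * (b - 1) * j - 2 * ((j : ℚ) * ((j * b / a : ℕ) : ℚ)) := by
    intro j hj
    rw [Finset.mem_range] at hj
    rcases Nat.eq_zero_or_pos j with rfl | hj0
    · simp
    have hc : ∑ k ∈ Finset.range b, (if j * b ≤ k * a then 0 else 2 * (j : ℚ))
        = (((j * b / a : ℕ) : ℚ) + 1) * (2 * j) := by
      have : (Finset.range b).filter (fun k => ¬ j * b ≤ k * a)
          = Finset.range (j * b / a + 1) := by
        ext k
        simp only [Finset.mem_filter, Finset.mem_range, Nat.lt_succ_iff, Nat.le_div_iff_mul_le ha]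
        constructor
        · exact fun h => by omega
        · intro h
          have hne : k * a ≠ j * b := by
            intro he
            have : a ∣ j * b := ⟨k, by rw [← he, mul_comm]⟩
            exact Nat.not_dvd_of_pos_of_lt hj0 hj (hab.dvd_of_dvd_mul_right this)
          refine ⟨?_, by omega⟩
          by_contra hk
          push Not at hk
          nlinarith
      have e : ∀ k, (if j * b ≤ k * a then 0 else 2 * (j : ℚ))
          = if ¬ j * b ≤ k * a then 2 * (j : ℚ) else 0 := by
        intro k; split_ifs <;> simp_all
      simp only [e]
      rw [← Finset.sum_filter, this]
      simp
    have ht : ∑ k ∈ Finset.range b, (if j * b ≤ k * a then 2 * (j : ℚ) else 0)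
        + ∑ k ∈ Finset.range b, (if j * b ≤ k * a then 0 else 2 * (j : ℚ)) = b * (2 * j) := by
      rw [← Finset.sum_add_distrib]
      have : ∀ k, ((if j * b ≤ k * a then 2 * (j : ℚ) else 0)
        + (if j * b ≤ k * a then 0 else 2 * (j : ℚ))) = 2 * j := by
        intro k; split_ifs <;> simp
      simp [this]
    rw [hc] at ht
    linarith
  rw [Finset.sum_congr rfl h1, Finset.sum_comm, Finset.sum_congr rfl h2, Finset.sum_sub_distrib,
    ← Finset.mul_sum, ← Finset.mul_sum, sum_one]
  ring

theorem dedekindSum_reciprocity (a b : ℕ) (ha : 0 < a) (hb : 0 < b)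
    (hab : Nat.Coprime a b) :
    12 * (a : ℚ) * b * (dedekindSum a b + dedekindSum b a) =
      -3 * (a : ℚ) * b + (a : ℚ) ^ 2 + (b : ℚ) ^ 2 + 1 := by
  have d1 := ded_eq_s7 a b hb hab
  have d2 := ded_eq_s7 b a ha hab.symm
  have q := sq_eq a b hb hab
  have l := lin_eq a b hb hab
  have t := lattice a b ha hb hab
  rw [Finset.sum_add_distrib, l] at t
  generalize dedekindSum (a : ℤ) b = X at *
  generalize dedekindSum (b : ℤ) a = Y at *
  generalize ∑ k ∈ Finset.range b, (k : ℚ) * ((k * a / b : ℕ) : ℚ) = A at *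
  generalize ∑ k ∈ Finset.range a, (k : ℚ) * ((k * b / a : ℕ) : ℚ) = B at *
  generalize ∑ k ∈ Finset.range b, ((k * a / b : ℕ) : ℚ) ^ 2 = Q at *
  have hb0 : (b : ℚ) ≠ 0 := by positivity
  apply mul_left_cancel₀ hb0
  linear_combination (12 * (a : ℚ) * b) * d1 + 12 * (b : ℚ) ^ 2 * d2 + 6 * q - 6 * (b : ℚ) ^ 2 * t
end
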